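/- Let (X,d,μ) be a metric measure space, φ : X → ℝⁿ Lipschitz, and C ⊂ ℝⁿ a cone, and suppose μ has a C-Alberti representation with respect to φ. Then, for any cones C₁,…,C_m ⊂ ℝⁿ with C \ {0} contained in the union of the interiors of the C_i, there exists a Borel decomposition X = A₁ ∪ … ∪ A_m such that for each i, μ restricted to A_i has a C_i-Alberti representation with respect to φ. -/

import Mathlib

open MeasureTheory Metric Set Filter Topology ENNReal NNReal
open scoped RealInnerProductSpace

noncomputable section

namespace BKO

/-- `ℝⁿ` with the Euclidean metric. -/
abbrev E (n : ℕ) : Type := EuclideanSpace ℝ (Fin n)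

variable {X : Type*} [MetricSpace X]

/-- A set `G ⊆ ℝ × X` is the graph of a curve fragment if all first coordinates lie
in `[0,1]` and it is the graph of a `2`-biLipschitz function defined on a subset of `[0,1]`. -/
def IsFragmentGraph (X : Type*) [MetricSpace X] (G : Set (ℝ × X)) : Prop :=
  (∀ p ∈ G, p.1 ∈ Set.Icc (0:ℝ) 1) ∧
  ∀ p ∈ G, ∀ q ∈ G, |p.1 - q.1| ≤ 2 * dist p.2 q.2 ∧ dist p.2 q.2 ≤ 2 * |p.1 - q.1|

/-- The space `Γ(X)` of curve fragments, identified with their graphs (nonempty compact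
subsets of `[0,1] × X`), with the Hausdorff metric `d_Γ(γ₁,γ₂) = d_H(gr γ₁, gr γ₂)`. -/
def Fragment (X : Type*) [MetricSpace X] : Type _ :=
  {G : TopologicalSpace.NonemptyCompacts (ℝ × X) // IsFragmentGraph X (G : Set (ℝ × X))}

instance : MetricSpace (Fragment X) :=
  inferInstanceAs (MetricSpace {G : TopologicalSpace.NonemptyCompacts (ℝ × X) // _})

instance : MeasurableSpace (Fragment X) := borel _
instance : BorelSpace (Fragment X) := ⟨rfl⟩

namespace Fragment

/-- The graph of a curve fragment. -/
def graph (γ : Fragment X) : Set (ℝ × X) := (γ.1 : Set (ℝ × X))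

/-- The (compact) domain of a curve fragment. -/
def dom (γ : Fragment X) : Set ℝ := Prod.fst '' γ.graph

/-- The image of a curve fragment. -/
def im (γ : Fragment X) : Set X := Prod.snd '' γ.graph

/-- The function `dom γ → X` determined by the graph (junk value off the domain). -/
def fn (γ : Fragment X) (t : ℝ) : X :=
  @dite X (∃ x, (t, x) ∈ γ.graph) (Classical.dec _)
    (fun h => h.choose) (fun _ => γ.1.nonempty.choose.2)

/-- `γ_* 𝓛¹`: the pushforward under `γ` of Lebesgue measure restricted to `dom γ`. -/
def measure [MeasurableSpace X] (γ : Fragment X) : Measure X :=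
  (volume.restrict γ.dom).map γ.fn

end Fragment

/-- The measure `ν(ℙ)`, `ν(ℙ)(B) = ∫ γ_*𝓛¹(B) dℙ(γ)`. -/
def nu [MeasurableSpace X] (ℙ : Measure (Fragment X)) : Measure X :=
  ℙ.bind Fragment.measure

/-- The cone `C(w,θ) = {v : |⟨v,w⟩| ≥ θ‖v‖}`. -/
def cone {n : ℕ} (w : E n) (θ : ℝ) : Set (E n) := {v | θ * ‖v‖ ≤ |⟪v, w⟫|}

/-- A cone in `ℝⁿ` is a set of the form `C(w,θ)` with `w ∈ Sⁿ⁻¹`, `θ ∈ (0,1)`. -/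
def IsCone {n : ℕ} (C : Set (E n)) : Prop :=
  ∃ (w : E n) (θ : ℝ), ‖w‖ = 1 ∧ θ ∈ Set.Ioo (0:ℝ) 1 ∧ C = cone w θ

/-- `γ` is a `C`-curve with respect to `φ`. -/
def IsConeCurve {n : ℕ} (φ : X → E n) (C : Set (E n)) (γ : Fragment X) : Prop :=
  ∃ δ > (0:ℝ), ∀ p ∈ γ.graph, ∀ q ∈ γ.graph,
    φ p.2 - φ q.2 ∈ C \ Metric.ball 0 (δ * |p.1 - q.1|)

/-- `ℙ` is a `C`-Alberti representation of `μ` with respect to `φ`. -/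
def IsConeAlbertiRep [MeasurableSpace X] {n : ℕ} (μ : Measure X) (φ : X → E n)
    (C : Set (E n)) (ℙ : Measure (Fragment X)) : Prop :=
  IsProbabilityMeasure ℙ ∧ μ ≪ nu ℙ ∧ ∀ᵐ γ ∂ℙ, IsConeCurve φ C γ

/-- `S` is `C`-null with respect to `φ`: every `C`-curve meets `S` in `𝓗¹`-measure zero. -/
def ConeNull [MeasurableSpace X] [BorelSpace X] {n : ℕ} (φ : X → E n) (C : Set (E n))
    (S : Set X) : Prop :=
  ∀ γ : Fragment X, IsConeCurve φ C γ → μH[1] (γ.im ∩ S) = 0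

/-- Cones `C₁,…,C_m` are independent. -/
def IndepCones {n m : ℕ} (C : Fin m → Set (E n)) : Prop :=
  ∀ v : Fin m → E n, (∀ i, v i ∈ C i ∧ v i ≠ 0) → LinearIndependent ℝ v

/-- `μ` has `n` independent Alberti representations. -/
def HasIndepAlberti [MeasurableSpace X] (μ : Measure X) (n : ℕ) : Prop :=
  ∃ φ : X → E n, (∃ K, LipschitzWith K φ) ∧ ∃ C : Fin n → Set (E n),
    (∀ i, IsCone (C i)) ∧ IndepCones C ∧ ∀ i, ∃ ℙ, IsConeAlbertiRep μ φ (C i) ℙ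

/-- The collection `𝒮(φ)` of singular sets. -/
def MemScal [MeasurableSpace X] [BorelSpace X] {n : ℕ} (φ : X → E n) (S : Set X) : Prop :=
  MeasurableSet S ∧ ∀ θ ∈ Set.Ioo (0:ℝ) 1, ∃ (m : ℕ) (S' : Fin m → Set X) (w : Fin m → E n),
    S = (⋃ i, S' i) ∧ ∀ i, MeasurableSet (S' i) ∧ ‖w i‖ = 1 ∧ ConeNull φ (cone (w i) θ) (S' i)

/-- `Lip(f,x) = limsup_{r→0⁺} sup_{d(x,y)≤r} |f(y)-f(x)|/r`. -/
def lipAt (f : X → ℝ) (x : X) : ℝ :=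
  Filter.limsup (fun r : ℝ => sSup ((fun y => |f y - f x| / r) '' Metric.closedBall x r))
    (𝓝[>] (0:ℝ))

/-- `ind φ = {x : Lip(D⬝φ, x) > 0 for all D ∈ Sⁿ⁻¹}`. -/
def indSet {n : ℕ} (φ : X → E n) : Set X :=
  {x | ∀ D : E n, ‖D‖ = 1 → 0 < lipAt (fun y => ⟪φ y, D⟫) x}

/-- `f` is differentiable with respect to `φ` at `x₀`, with a unique derivative. -/
def DiffWrtAt {n : ℕ} (φ : X → E n) (f : X → ℝ) (x₀ : X) : Prop :=
  ∃! L : E n →ₗ[ℝ] ℝ,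
    Filter.Tendsto (fun x => |f x - f x₀ - L (φ x - φ x₀)| / dist x x₀) (𝓝[≠] x₀) (𝓝 0)

/-- `(X,d,μ)` is a Lipschitz differentiability space, with all chart dimensions
satisfying the predicate `P`. -/
def IsLipDiffSpaceWith [MeasurableSpace X] (μ : Measure X) (P : ℕ → Prop) : Prop :=
  ∃ (N : ℕ → ℕ) (U : ℕ → Set X) (φ : (i : ℕ) → X → E (N i)),
    (∀ i, P (N i)) ∧ (∀ i, MeasurableSet (U i)) ∧ (⋃ i, U i) = Set.univ ∧
    (∀ i, ∃ K, LipschitzWith K (φ i)) ∧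
    ∀ f : X → ℝ, (∃ K, LipschitzWith K f) →
      ∀ i, ∀ᵐ x ∂μ, x ∈ U i → DiffWrtAt (φ i) f x

/-- `ρ` is an upper gradient of `f`. -/
def IsUpperGradient (f ρ : X → ℝ) : Prop :=
  ∀ γ : ℝ → X, LipschitzOnWith 1 γ (Set.Icc 0 1) →
    |f (γ 1) - f (γ 0)| ≤ ∫ t in Set.Icc (0:ℝ) 1, ρ (γ t)

/-- `ρ` is a `*`-upper gradient of `f`. -/
def IsStarUpperGradient (f ρ : X → ℝ) : Prop :=
  ∀ γ : Fragment X, LipschitzOnWith 1 γ.fn γ.dom →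
    ∀ᵐ t ∂(volume.restrict γ.dom),
      ∀ v : ℝ, HasDerivWithinAt (f ∘ γ.fn) v γ.dom t → |v| ≤ ρ (γ.fn t)

/-- The dyadic cube of side length `2^{-m}` in `[0,1)ⁿ` indexed by `k`. -/
def dyadicCube (n m : ℕ) (k : Fin n → Fin (2 ^ m)) : Set (E n) :=
  {x | ∀ i, (k i : ℝ) / 2 ^ m ≤ x i ∧ x i < ((k i : ℝ) + 1) / 2 ^ m}

variable {X : Type*} [MetricSpace X] [CompleteSpace X] [TopologicalSpace.SeparableSpace X]
  [MeasurableSpace X] [BorelSpace X]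

/-! A fragment of a `C`-curve whose points lie within `η` of each other in the parameter, and all of
whose increments of `φ` at scale `η` lie in `C'ᵢ`, is a `C'ᵢ`-curve. By Rademacher, `φ ∘ γ` has a
derivative in `C \ {0}` at almost every parameter of a `C`-curve `γ`; this derivative lies in the
interior of some `C'ᵢ`, so almost every point of `γ` belongs to such a fragment. Only countably many
scales and rational windows are needed, so mixing the push-forwards of `ℙ` under the corresponding
restriction maps gives a probability measure `ℙᵢ` on `C'ᵢ`-curves, and `nu ℙ` is absolutely
continuous with respect to `∑ᵢ nu ℙᵢ`. The Lebesgue decompositions of `nu ℙ` with respect to the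
`nu ℙᵢ` give the sets `Aᵢ`. -/

lemma exists_iUnion_eq_univ_restrict_absolutelyContinuous {α ι : Type*} [MeasurableSpace α]
    [Countable ι] [Nonempty ι] {μ : Measure α} {ν : ι → Measure α}
    [∀ i, μ.HaveLebesgueDecomposition (ν i)] (h : μ ≪ Measure.sum ν) :
    ∃ A : ι → Set α, (∀ i, MeasurableSet (A i)) ∧ (⋃ i, A i) = univ ∧
      ∀ i, μ.restrict (A i) ≪ ν i := by
  choose S hS hS0 hSc using fun i => μ.mutuallySingular_singularPart (ν i)
  have hN : MeasurableSet (⋂ i, (S i)ᶜ) := .iInter fun i => (hS i).compl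
  have hN0 : μ (⋂ i, (S i)ᶜ) = 0 := h <|
    Measure.sum_apply_eq_zero.2 fun i => measure_mono_null (iInter_subset _ i) (hSc i)
  have hrestrict (i : ι) : μ.restrict (S i) ≪ ν i := by
    rw [Measure.haveLebesgueDecomposition_add μ (ν i), Measure.restrict_add,
      Measure.restrict_eq_zero.2 (hS0 i), zero_add]
    exact Measure.restrict_le_self.absolutelyContinuous.trans (withDensity_absolutelyContinuous _ _)
  refine ⟨fun i => S i ∪ ⋂ i, (S i)ᶜ, fun i => (hS i).union hN, ?_, fun i => ?_⟩
  · rw [← iUnion_union, ← compl_iUnion, union_compl_self]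
  · rw [Measure.restrict_congr_set (union_ae_eq_left_of_ae_eq_empty (ae_eq_empty.2 hN0))]
    exact hrestrict i

section UnrelatedPart

open TopologicalSpace (NonemptyCompacts)

variable {α : Type*}

/-- The points of `S` that are not `W`-related to any point of `S`. -/
def unrelatedPart (W : Set (α × α)) (S : Set α) : Set α :=
  {p ∈ S | ∀ q ∈ S, (p, q) ∉ W}

lemma unrelatedPart_inter {W : Set (α × α)} {S F : Set α} :
    unrelatedPart W S ∩ F = unrelatedPart (W ∪ Fᶜ ×ˢ univ) S := by
  ext p
  simp only [unrelatedPart, mem_inter_iff, mem_ofPred_eq, mem_union, mem_prod, mem_compl_iff,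
    mem_univ, and_true, not_or, not_not]
  exact ⟨fun h => ⟨h.1.1, fun q hq => ⟨h.1.2 q hq, h.2⟩⟩,
    fun h => ⟨⟨h.1, fun q hq => (h.2 q hq).1⟩, (h.2 p h.1).2⟩⟩

variable [TopologicalSpace α]

lemma isClosed_forall_pair_mem {F : Set (α × α)} (hF : IsClosed F) :
    IsClosed {K : NonemptyCompacts α | ∀ p ∈ K, ∀ q ∈ K, (p, q) ∈ F} := by
  have hsq : Continuous fun K : NonemptyCompacts α => K ×ˢ K := by fun_prop
  convert (NonemptyCompacts.isClosed_subsets_of_isClosed hF).preimage hsq using 1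
  ext K
  simp [prod_subset_iff]

lemma isOpen_forall_exists_pair_mem {W : Set (α × α)} (hW : IsOpen W) :
    IsOpen {K : NonemptyCompacts α | ∀ p ∈ K, ∃ q ∈ K, (p, q) ∈ W} := by
  have hhit : IsOpen {z : NonemptyCompacts α × α | ∃ q ∈ z.1, (z.2, q) ∈ W} := by
    have hprod : Continuous fun z : NonemptyCompacts α × α =>
        ({z.2} : NonemptyCompacts α) ×ˢ z.1 :=
      NonemptyCompacts.continuous_prod.comp
        ((NonemptyCompacts.continuous_singleton.comp continuous_snd).prodMk continuous_fst)
    convert (NonemptyCompacts.isOpen_inter_nonempty_of_isOpen hW).preimage hprod using 1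
    ext z
    simp [Set.Nonempty, ← SetLike.mem_coe]
  have hprod : Continuous fun K : NonemptyCompacts α =>
      ({K} : NonemptyCompacts (NonemptyCompacts α)) ×ˢ K :=
    NonemptyCompacts.continuous_prod.comp
      (NonemptyCompacts.continuous_singleton.prodMk continuous_id)
  convert (NonemptyCompacts.isOpen_subsets_of_isOpen hhit).preimage hprod using 1
  ext K
  simp [prod_subset_iff]

lemma isCompact_unrelatedPart {W : Set (α × α)} (hW : IsOpen W) {S : Set α} (hS : IsCompact S) :
    IsCompact (unrelatedPart W S) := by
  have hclosed : IsClosed {p | ∀ q ∈ S, (p, q) ∉ W} := by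
    simp only [ofPred_forall]
    exact isClosed_biInter fun q _ => (hW.preimage (Continuous.prodMk_left q)).isClosed_compl
  exact hS.inter_right hclosed

lemma isClosed_unrelatedPart_nonempty {W : Set (α × α)} (hW : IsOpen W) :
    IsClosed {K : NonemptyCompacts α | (unrelatedPart W (K : Set α)).Nonempty} := by
  convert (isOpen_forall_exists_pair_mem hW).isClosed_compl using 1
  ext K
  simp [unrelatedPart, Set.Nonempty]

end UnrelatedPart

section Fragments

variable {X : Type*} [MetricSpace X]

namespace Fragment

lemma fn_mem_graph {γ : Fragment X} {t : ℝ} (ht : t ∈ γ.dom) : (t, γ.fn t) ∈ γ.graph := by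
  obtain ⟨⟨t, x⟩, hx, rfl⟩ := ht
  have h : ∃ y, (t, y) ∈ γ.graph := ⟨x, hx⟩
  rw [fn, dif_pos h]
  exact h.choose_spec

lemma fst_mem_dom {γ : Fragment X} {p : ℝ × X} (hp : p ∈ γ.graph) : p.1 ∈ γ.dom :=
  mem_image_of_mem _ hp

lemma fn_fst {γ : Fragment X} {p : ℝ × X} (hp : p ∈ γ.graph) : γ.fn p.1 = p.2 := by
  have h := (γ.2.2 _ (fn_mem_graph (fst_mem_dom hp)) _ hp).2
  simp only [sub_self, abs_zero, mul_zero] at h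
  exact dist_le_zero.1 h

lemma isCompact_graph (γ : Fragment X) : IsCompact γ.graph := γ.1.isCompact

lemma isCompact_dom (γ : Fragment X) : IsCompact γ.dom := γ.isCompact_graph.image continuous_fst

lemma isCompact_im (γ : Fragment X) : IsCompact γ.im := γ.isCompact_graph.image continuous_snd

lemma dom_subset_Icc (γ : Fragment X) : γ.dom ⊆ Icc 0 1 := by
  rintro _ ⟨p, hp, rfl⟩
  exact γ.2.1 p hp

lemma mapsTo_fn (γ : Fragment X) : MapsTo γ.fn γ.dom γ.im :=
  fun _ ht => mem_image_of_mem Prod.snd (fn_mem_graph ht)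

lemma lipschitzOnWith_fn (γ : Fragment X) : LipschitzOnWith 2 γ.fn γ.dom :=
  .of_dist_le_mul fun _ hs _ ht => (γ.2.2 _ (fn_mem_graph hs) _ (fn_mem_graph ht)).2

/-- The fragment consisting of the single point `x`, parametrised by `0`. -/
def single (x : X) : Fragment X :=
  ⟨{(0, x)}, by simp, by simp⟩

lemma graph_single (x : X) : (single x).graph = {(0, x)} := rfl

/-- The restriction of `γ` to a nonempty compact part `G` of its graph. -/
def ofSubset (γ : Fragment X) {G : Set (ℝ × X)} (hG : IsCompact G) (hne : G.Nonempty)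
    (hsub : G ⊆ γ.graph) : Fragment X :=
  ⟨⟨⟨G, hG⟩, hne⟩, fun p hp => γ.2.1 p (hsub hp),
    fun p hp q hq => γ.2.2 p (hsub hp) q (hsub hq)⟩

open Classical in
/-- The restriction of `γ` to the points of its graph that are not `W`-related to any point of its
graph. The value is `γ₀` where this is not a nonempty compact set. -/
def trim (W : Set ((ℝ × X) × (ℝ × X))) (γ₀ γ : Fragment X) : Fragment X :=
  if h : IsCompact (unrelatedPart W γ.graph) ∧ (unrelatedPart W γ.graph).Nonempty then
    γ.ofSubset h.1 h.2 fun _ hp => hp.1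
  else γ₀

section Trim

variable {W : Set ((ℝ × X) × (ℝ × X))} {γ₀ γ : Fragment X}

lemma graph_trim (hW : IsOpen W) (h : (unrelatedPart W γ.graph).Nonempty) :
    (trim W γ₀ γ).graph = unrelatedPart W γ.graph := by
  rw [trim, dif_pos ⟨isCompact_unrelatedPart hW γ.isCompact_graph, h⟩]
  rfl

lemma trim_eq_of_not_nonempty (h : ¬ (unrelatedPart W γ.graph).Nonempty) :
    trim W γ₀ γ = γ₀ :=
  dif_neg fun h' => h h'.2

end Trim

section Measurability

lemma isOpen_graph_subset {U : Set (ℝ × X)} (hU : IsOpen U) :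
    IsOpen {γ : Fragment X | γ.graph ⊆ U} :=
  (TopologicalSpace.NonemptyCompacts.isOpen_subsets_of_isOpen hU).preimage continuous_subtype_val

/-- The topology of `Fragment X` is generated by the sets of fragments that are contained in, or
that meet, a given open set. -/
lemma measurable_of_isClosed_inter_nonempty [SecondCountableTopology X] {α : Type*}
    [MeasurableSpace α] {f : α → Fragment X}
    (hf : ∀ F : Set (ℝ × X), IsClosed F → MeasurableSet {a | ((f a).graph ∩ F).Nonempty}) :
    Measurable f := by
  have : SecondCountableTopology (Fragment X) :=
    inferInstanceAs (SecondCountableTopology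
      {G : TopologicalSpace.NonemptyCompacts (ℝ × X) // IsFragmentGraph X (G : Set (ℝ × X))})
  have hvietoris : (inferInstance : TopologicalSpace (Fragment X)) =
      .generateFrom (preimage (graph : Fragment X → Set (ℝ × X)) ''
        (powerset '' {U | IsOpen U} ∪ (fun V => {s | (s ∩ V).Nonempty}) '' {V | IsOpen V})) := by
    rw [← induced_generateFrom_eq]
    exact induced_compose
  rw [BorelSpace.measurable_eq (α := Fragment X), borel_eq_generateFrom_of_subbasis hvietoris]
  refine measurable_generateFrom ?_
  rintro _ ⟨_, ⟨U, hU, rfl⟩ | ⟨V, hV, rfl⟩, rfl⟩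
  · convert (hf Uᶜ (IsOpen.isClosed_compl hU)).compl using 1
    ext a
    simp [inter_compl_nonempty_iff]
  · obtain ⟨F, hF, -, rfl, -⟩ := IsOpen.exists_iUnion_isClosed (U := V) hV
    simp only [inter_iUnion, nonempty_iUnion, ofPred_exists, preimage_iUnion]
    exact .iUnion fun k => hf _ (hF k)

lemma measurable_trim [SecondCountableTopology X] {W : Set ((ℝ × X) × (ℝ × X))} (hW : IsOpen W)
    (γ₀ : Fragment X) : Measurable (trim W γ₀) := by
  have hmeas {V : Set ((ℝ × X) × (ℝ × X))} (hV : IsOpen V) :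
      MeasurableSet {γ : Fragment X | (unrelatedPart V γ.graph).Nonempty} := by
    have hclosed : IsClosed {γ : Fragment X | (unrelatedPart V γ.graph).Nonempty} :=
      (isClosed_unrelatedPart_nonempty hV).preimage continuous_subtype_val
    exact hclosed.measurableSet
  refine measurable_of_isClosed_inter_nonempty fun F hF => ?_
  have hsplit : {γ : Fragment X | ((trim W γ₀ γ).graph ∩ F).Nonempty} =
      {γ | (unrelatedPart (W ∪ Fᶜ ×ˢ univ) γ.graph).Nonempty} ∪
        ({γ | (unrelatedPart W γ.graph).Nonempty}ᶜ ∩ {_γ | (γ₀.graph ∩ F).Nonempty}) := by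
    ext γ
    simp only [mem_union, mem_inter_iff, mem_compl_iff, mem_ofPred_eq, ← unrelatedPart_inter]
    by_cases h : (unrelatedPart W γ.graph).Nonempty
    · simp [graph_trim hW h, h]
    · simp [trim_eq_of_not_nonempty h, not_nonempty_iff_eq_empty.1 h]
  rw [hsplit]
  exact (hmeas (hW.union (hF.isOpen_compl.prod isOpen_univ))).union
    ((hmeas hW).compl.inter (.const _))

variable [MeasurableSpace X] [BorelSpace X]

lemma measure_apply (γ : Fragment X) {B : Set X} (hB : MeasurableSet B) :
    γ.measure B = volume (Prod.fst '' (γ.graph ∩ Prod.snd ⁻¹' B)) := by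
  have hfn : AEMeasurable γ.fn (volume.restrict γ.dom) :=
    γ.lipschitzOnWith_fn.continuousOn.aemeasurable γ.isCompact_dom.measurableSet
  rw [measure, Measure.map_apply_of_aemeasurable hfn hB,
    Measure.restrict_apply' γ.isCompact_dom.measurableSet]
  congr 1
  ext t
  constructor
  · rintro ⟨htB, ht⟩
    exact ⟨_, ⟨fn_mem_graph ht, htB⟩, rfl⟩
  · rintro ⟨p, ⟨hp, hpB⟩, rfl⟩
    exact ⟨by rwa [mem_preimage, fn_fst hp], fst_mem_dom hp⟩

lemma measure_univ_le_one (γ : Fragment X) : γ.measure univ ≤ 1 := by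
  rw [measure_apply _ .univ, preimage_univ, inter_univ]
  calc volume γ.dom ≤ volume (Icc (0 : ℝ) 1) := measure_mono γ.dom_subset_Icc
    _ = 1 := by simp

lemma upperSemicontinuous_measure_apply {F : Set X} (hF : IsClosed F) :
    UpperSemicontinuous fun γ : Fragment X => γ.measure F := by
  intro γ c hγ
  simp only [measure_apply _ hF.measurableSet] at hγ ⊢
  obtain ⟨U, hsub, hU, hUc⟩ := Set.exists_isOpen_lt_of_lt _ _ hγ
  have hopen : IsOpen (Prod.fst ⁻¹' U ∪ Prod.snd ⁻¹' Fᶜ : Set (ℝ × X)) :=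
    (hU.preimage continuous_fst).union (hF.isOpen_compl.preimage continuous_snd)
  have hγU : γ.graph ⊆ Prod.fst ⁻¹' U ∪ Prod.snd ⁻¹' Fᶜ := fun p hp =>
    or_iff_not_imp_right.2 fun hpF => hsub ⟨p, ⟨hp, not_not.1 hpF⟩, rfl⟩
  filter_upwards [(isOpen_graph_subset hopen).mem_nhds hγU] with γ' hγ'
  refine (measure_mono ?_).trans_lt hUc
  rintro _ ⟨p, ⟨hp, hpF⟩, rfl⟩
  exact (hγ' hp).resolve_right (not_not.2 hpF)

lemma measurable_measure : Measurable (Fragment.measure : Fragment X → Measure X) := by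
  have hfin (γ : Fragment X) : IsFiniteMeasure γ.measure :=
    ⟨γ.measure_univ_le_one.trans_lt ENNReal.one_lt_top⟩
  exact .measure_of_isPiSystem (BorelSpace.measurable_eq.trans borel_eq_generateFrom_isClosed)
    isPiSystem_isClosed (fun F hF => (upperSemicontinuous_measure_apply hF).measurable)
    (upperSemicontinuous_measure_apply isClosed_univ).measurable

end Measurability

end Fragment

section Nu

variable [MeasurableSpace X] [BorelSpace X]

lemma nu_apply_eq_zero_iff {ℙ : Measure (Fragment X)} {B : Set X} (hB : MeasurableSet B) :
    nu ℙ B = 0 ↔ ∀ᵐ γ ∂ℙ, γ.measure B = 0 := by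
  have hmeas : Measurable fun γ : Fragment X => γ.measure B :=
    (Measure.measurable_coe hB).comp Fragment.measurable_measure
  rw [nu, Measure.bind_apply hB Fragment.measurable_measure.aemeasurable,
    lintegral_eq_zero_iff hmeas]
  rfl

instance {ℙ : Measure (Fragment X)} [IsFiniteMeasure ℙ] : IsFiniteMeasure (nu ℙ) := by
  refine ⟨?_⟩
  rw [nu, Measure.bind_apply .univ Fragment.measurable_measure.aemeasurable]
  calc ∫⁻ γ, γ.measure univ ∂ℙ ≤ ∫⁻ _, 1 ∂ℙ := lintegral_mono fun γ => γ.measure_univ_le_one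
    _ < ∞ := by simp

end Nu

end Fragments

section DoubleCones

variable {V : Type*} [NormedAddCommGroup V] [NormedSpace ℝ V]

/-- A closed set containing `0` and invariant under all real scalings, such as each of the two-sided
cones `C(w, θ)`. -/
structure IsClosedDoubleCone (C : Set V) : Prop where
  isClosed : IsClosed C
  zero_mem : 0 ∈ C
  smul_mem : ∀ (c : ℝ) {v : V}, v ∈ C → c • v ∈ C

lemma IsClosedDoubleCone.eventually_sub_mem {C : Set V} (hC : IsClosedDoubleCone C) {f : ℝ → V}
    {s : Set ℝ} {t : ℝ} (h : ∀ᶠ u in 𝓝[s \ {t}] t, slope f t u ∈ C) :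
    ∀ᶠ u in 𝓝[s] t, f t - f u ∈ C := by
  have hpunctured : ∀ᶠ u in 𝓝[s \ {t}] t, f t - f u ∈ C := by
    filter_upwards [h] with u hu
    have h := hC.smul_mem (-(u - t)) hu
    rwa [neg_smul, sub_smul_slope, vsub_eq_sub, neg_sub] at h
  have hinsert : {u | f t - f u ∈ C} ∈ 𝓝[insert t (s \ {t})] t :=
    mem_nhdsWithin_insert.2 ⟨by simpa using hC.zero_mem, hpunctured⟩
  exact nhdsWithin_mono t (by simp) hinsert

variable {n : ℕ} {C : Set (E n)}

lemma IsCone.isClosedDoubleCone (hC : IsCone C) : IsClosedDoubleCone C := by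
  obtain ⟨w, θ, -, -, rfl⟩ := hC
  refine ⟨isClosed_le (by fun_prop) (by fun_prop), by simp [cone], fun c v hv => ?_⟩
  simp only [cone, mem_ofPred_eq, norm_smul, real_inner_smul_left, abs_mul, Real.norm_eq_abs]
    at hv ⊢
  calc θ * (|c| * ‖v‖) = |c| * (θ * ‖v‖) := by ring
    _ ≤ |c| * |⟪v, w⟫| := by gcongr

lemma IsCone.diff_zero_nonempty (hC : IsCone C) : (C \ {0}).Nonempty := by
  obtain ⟨w, θ, hw, hθ, rfl⟩ := hC
  exact ⟨w, by simp [cone, hw, hθ.2.le], norm_ne_zero_iff.1 (by simp [hw])⟩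

end DoubleCones

section BadPairs

variable {X : Type*} {n : ℕ} {φ : X → E n} {C : Set (E n)}

/-- The pairs `(p, q)` that prevent `p` from being kept when a fragment is cut down to a `C`-curve
at scale `η` near the parameter `r`: either `p` lies outside the window of radius `η / 3` around
`r`, or `q` is `η`-close to `p` and the increment of `φ` between them is not in `C`. -/
def badPairs (φ : X → E n) (C : Set (E n)) (r η : ℝ) : Set ((ℝ × X) × (ℝ × X)) :=
  {z | η / 3 < dist z.1.1 r ∨ dist z.2.1 z.1.1 < η ∧ φ z.1.2 - φ z.2.2 ∉ C}

lemma sub_mem_of_mem_unrelatedPart_badPairs {r η : ℝ} (hη : 0 < η) {S : Set (ℝ × X)} {p q : ℝ × X}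
    (hp : p ∈ unrelatedPart (badPairs φ C r η) S) (hq : q ∈ unrelatedPart (badPairs φ C r η) S) :
    φ p.2 - φ q.2 ∈ C := by
  have hpr : dist p.1 r ≤ η / 3 := not_lt.1 fun h => hp.2 p hp.1 (.inl h)
  have hqr : dist q.1 r ≤ η / 3 := not_lt.1 fun h => hq.2 q hq.1 (.inl h)
  have hqp : dist q.1 p.1 < η := by linarith [dist_triangle_right q.1 p.1 r]
  exact by_contra fun hpq => hp.2 q hq.1 (.inr ⟨hqp, hpq⟩)

end BadPairs

section ConeCurves

variable {X : Type*} [MetricSpace X] {n : ℕ} {φ : X → E n} {C C' : Set (E n)} {γ₀ γ : Fragment X}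

lemma isConeCurve_single (hC : 0 ∈ C) (x : X) : IsConeCurve φ C (Fragment.single x) := by
  refine ⟨1, one_pos, ?_⟩
  simp [Fragment.graph_single, hC]

lemma isConeCurve_iff_exists_nat : IsConeCurve φ C γ ↔ ∃ k : ℕ, ∀ p ∈ γ.graph, ∀ q ∈ γ.graph,
    φ p.2 - φ q.2 ∈ C ∧ 1 / ((k : ℝ) + 1) * |p.1 - q.1| ≤ ‖φ p.2 - φ q.2‖ := by
  simp only [IsConeCurve, Set.mem_sdiff, mem_ball_zero_iff, not_lt]
  constructor
  · rintro ⟨δ, hδ, h⟩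
    obtain ⟨k, hk⟩ := exists_nat_one_div_lt hδ
    exact ⟨k, fun p hp q hq => ⟨(h p hp q hq).1, le_trans (by gcongr) (h p hp q hq).2⟩⟩
  · rintro ⟨k, h⟩
    exact ⟨1 / ((k : ℝ) + 1), by positivity, h⟩

lemma measurableSet_isConeCurve (hφ : Continuous φ) (hC : IsClosed C) :
    MeasurableSet {γ : Fragment X | IsConeCurve φ C γ} := by
  simp only [isConeCurve_iff_exists_nat, ofPred_exists]
  refine .iUnion fun k => IsClosed.measurableSet ?_
  have hincrement : Continuous fun z : (ℝ × X) × (ℝ × X) => φ z.1.2 - φ z.2.2 := by fun_prop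
  have hlower : IsClosed {z : (ℝ × X) × (ℝ × X) |
      1 / ((k : ℝ) + 1) * |z.1.1 - z.2.1| ≤ ‖φ z.1.2 - φ z.2.2‖} :=
    isClosed_le (by fun_prop) (by fun_prop)
  exact (isClosed_forall_pair_mem ((hC.preimage hincrement).inter hlower)).preimage
    continuous_subtype_val

lemma Fragment.ae_differentiableWithinAt (hφ : LocallyLipschitz φ) (γ : Fragment X) :
    ∀ᵐ t : ℝ, t ∈ γ.dom → DifferentiableWithinAt ℝ (φ ∘ γ.fn) γ.dom t := by
  have him : LocallyLipschitzOn γ.im φ := hφ.locallyLipschitzOn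
  obtain ⟨K, hK⟩ := him.exists_lipschitzOnWith_of_compact γ.isCompact_im
  exact (hK.comp γ.lipschitzOnWith_fn γ.mapsTo_fn).locallyBoundedVariationOn
    |>.ae_differentiableWithinAt_of_mem

lemma IsConeCurve.hasDerivWithinAt_mem (hC : IsClosedDoubleCone C) (hγ : IsConeCurve φ C γ) {t : ℝ}
    (ht : t ∈ γ.dom) [(𝓝[γ.dom \ {t}] t).NeBot] {v : E n}
    (hv : HasDerivWithinAt (φ ∘ γ.fn) v γ.dom t) : v ∈ C \ {0} := by
  obtain ⟨δ, hδ, hγ⟩ := hγ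
  have hslope := hasDerivWithinAt_iff_tendsto_slope.1 hv
  have hmem : ∀ᶠ s in 𝓝[γ.dom \ {t}] t,
      slope (φ ∘ γ.fn) t s ∈ C ∧ δ ≤ ‖slope (φ ∘ γ.fn) t s‖ := by
    filter_upwards [self_mem_nhdsWithin] with s hs
    have hst := hγ _ (Fragment.fn_mem_graph hs.1) _ (Fragment.fn_mem_graph ht)
    rw [Set.mem_sdiff, mem_ball_zero_iff, not_lt] at hst
    have hpos : 0 < |s - t| := abs_pos.2 (sub_ne_zero.2 hs.2)
    rw [slope_def_module, norm_smul, norm_inv, Real.norm_eq_abs, ← div_eq_inv_mul, le_div_iff₀ hpos]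
    exact ⟨hC.smul_mem _ hst.1, hst.2⟩
  have hvδ : δ ≤ ‖v‖ := ge_of_tendsto hslope.norm (hmem.mono fun _ h => h.2)
  exact ⟨hC.isClosed.mem_of_tendsto hslope (hmem.mono fun _ h => h.1),
    norm_pos_iff.1 (hδ.trans_le hvδ)⟩

lemma IsConeCurve.ae_exists_eventually_sub_mem (hφ : LocallyLipschitz φ)
    (hC : IsClosedDoubleCone C) {ι : Type*} [Nonempty ι] {C' : ι → Set (E n)}
    (hC' : ∀ i, IsClosedDoubleCone (C' i)) (hcover : C \ {0} ⊆ ⋃ i, interior (C' i))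
    (hγ : IsConeCurve φ C γ) :
    ∀ᵐ t : ℝ, t ∈ γ.dom → ∃ i, ∀ᶠ s in 𝓝[γ.dom] t, φ (γ.fn t) - φ (γ.fn s) ∈ C' i := by
  filter_upwards [γ.ae_differentiableWithinAt hφ] with t hdiff ht
  have hderiv := (hdiff ht).hasDerivWithinAt
  suffices h : ∃ i, ∀ᶠ s in 𝓝[γ.dom \ {t}] t, slope (φ ∘ γ.fn) t s ∈ C' i from
    h.imp fun i hi => (hC' i).eventually_sub_mem hi
  rcases eq_or_neBot (𝓝[γ.dom \ {t}] t) with hisolated | hacc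
  · exact ⟨Classical.arbitrary ι, by simp [hisolated]⟩
  · obtain ⟨i, hi⟩ := mem_iUnion.1 (hcover (hγ.hasDerivWithinAt_mem hC ht hderiv))
    exact ⟨i, hasDerivWithinAt_iff_tendsto_slope.1 hderiv (mem_interior_iff_mem_nhds.1 hi)⟩

lemma isOpen_badPairs (hφ : Continuous φ) (hC : IsClosed C) (r η : ℝ) :
    IsOpen (badPairs φ C r η) := by
  have hincrement : Continuous fun z : (ℝ × X) × (ℝ × X) => φ z.1.2 - φ z.2.2 := by fun_prop
  have hwindow : IsOpen {z : (ℝ × X) × (ℝ × X) | η / 3 < dist z.1.1 r} :=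
    isOpen_lt (by fun_prop) (by fun_prop)
  have hclose : IsOpen {z : (ℝ × X) × (ℝ × X) | dist z.2.1 z.1.1 < η} :=
    isOpen_lt (by fun_prop) (by fun_prop)
  exact hwindow.union (hclose.inter (hC.isOpen_compl.preimage hincrement))

lemma exists_mem_unrelatedPart_badPairs {t : ℝ} (ht : t ∈ γ.dom)
    (h : ∀ᶠ s in 𝓝[γ.dom] t, φ (γ.fn t) - φ (γ.fn s) ∈ C) :
    ∃ j : ℚ × ℕ, (t, γ.fn t) ∈ unrelatedPart (badPairs φ C j.1 (1 / ((j.2 : ℝ) + 1))) γ.graph := by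
  obtain ⟨η, hη, hsub⟩ := Metric.mem_nhdsWithin_iff.1 h
  obtain ⟨k, hk⟩ := exists_nat_one_div_lt hη
  obtain ⟨r, hr⟩ := Rat.denseRange_cast.exists_dist_lt t
    (show (0 : ℝ) < 1 / ((k : ℝ) + 1) / 3 by positivity)
  refine ⟨(r, k), Fragment.fn_mem_graph ht, fun q hq hbad => ?_⟩
  rcases hbad with hwindow | ⟨hqt, hφq⟩
  · exact hwindow.not_gt hr
  · have hmem := hsub ⟨hqt.trans hk, Fragment.fst_mem_dom hq⟩
    rw [mem_ofPred_eq, Fragment.fn_fst hq] at hmem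
    exact hφq hmem

lemma IsConeCurve.trim_badPairs (hφ : Continuous φ) (hC' : IsClosed C') {r η : ℝ} (hη : 0 < η)
    (hγ : IsConeCurve φ C γ) (hγ₀ : IsConeCurve φ C' γ₀) :
    IsConeCurve φ C' (Fragment.trim (badPairs φ C' r η) γ₀ γ) := by
  by_cases h : (unrelatedPart (badPairs φ C' r η) γ.graph).Nonempty
  · obtain ⟨δ, hδ, hγ⟩ := hγ
    refine ⟨δ, hδ, ?_⟩
    rw [Fragment.graph_trim (isOpen_badPairs hφ hC' r η) h]
    exact fun p hp q hq =>
      ⟨sub_mem_of_mem_unrelatedPart_badPairs hη hp hq, (hγ p hp.1 q hq.1).2⟩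
  · rwa [Fragment.trim_eq_of_not_nonempty h]

end ConeCurves

section Refinement

variable {X : Type*} [MetricSpace X] {n : ℕ} {φ : X → E n} {C C' : Set (E n)} {γ₀ γ : Fragment X}
  {ℙ : Measure (Fragment X)}

/-- The restriction of `γ` to a `C`-curve, for the rational window centre `j.1` and the scale
`1 / (j.2 + 1)`. The value is `γ₀` if no point of `γ` is left. -/
def coneTrim (φ : X → E n) (C : Set (E n)) (γ₀ : Fragment X) (j : ℚ × ℕ) :
    Fragment X → Fragment X :=
  Fragment.trim (badPairs φ C j.1 (1 / ((j.2 : ℝ) + 1))) γ₀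

lemma measurable_coneTrim [SecondCountableTopology X] (hφ : Continuous φ) (hC : IsClosed C)
    (j : ℚ × ℕ) : Measurable (coneTrim φ C γ₀ j) :=
  Fragment.measurable_trim (isOpen_badPairs hφ hC _ _) γ₀

lemma IsConeCurve.measure_eq_zero_of_coneTrim [MeasurableSpace X] [BorelSpace X]
    (hφ : LocallyLipschitz φ) (hC : IsClosedDoubleCone C) {ι : Type*} [Countable ι] [Nonempty ι]
    {C' : ι → Set (E n)} (hC' : ∀ i, IsClosedDoubleCone (C' i))
    (hcover : C \ {0} ⊆ ⋃ i, interior (C' i)) (hγ : IsConeCurve φ C γ) {B : Set X}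
    (hB : MeasurableSet B) (h : ∀ i j, (coneTrim φ (C' i) γ₀ j γ).measure B = 0) :
    γ.measure B = 0 := by
  simp only [Fragment.measure_apply _ hB] at h ⊢
  refine measure_mono_null_ae ?_ (measure_iUnion_null fun i => measure_iUnion_null (h i))
  filter_upwards [hγ.ae_exists_eventually_sub_mem hφ hC hC' hcover] with t ht
  rintro ⟨p, ⟨hp, hpB⟩, rfl⟩
  obtain ⟨i, hi⟩ := ht (Fragment.fst_mem_dom hp)
  obtain ⟨j, hj⟩ := exists_mem_unrelatedPart_badPairs (Fragment.fst_mem_dom hp) hi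
  rw [Fragment.fn_fst hp] at hj
  refine mem_iUnion₂.2 ⟨i, j, p, ⟨?_, hpB⟩, rfl⟩
  rwa [coneTrim, Fragment.graph_trim (isOpen_badPairs hφ.continuous (hC' i).isClosed _ _) ⟨p, hj⟩]

/-- A finite measure with the same null sets as the sum of the push-forwards of `ℙ` under all
restriction maps to `C`-curves. -/
def coneRefinement (φ : X → E n) (C : Set (E n)) (γ₀ : Fragment X) (ℙ : Measure (Fragment X))
    [SFinite ℙ] : Measure (Fragment X) :=
  (Measure.sum fun j => ℙ.map (coneTrim φ C γ₀ j)).toFinite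

instance [SFinite ℙ] : IsFiniteMeasure (coneRefinement φ C γ₀ ℙ) :=
  inferInstanceAs (IsFiniteMeasure (Measure.toFinite _))

lemma ae_coneRefinement_iff [SFinite ℙ] {P : Fragment X → Prop} :
    (∀ᵐ γ ∂coneRefinement φ C γ₀ ℙ, P γ) ↔ ∀ j, ∀ᵐ γ ∂ℙ.map (coneTrim φ C γ₀ j), P γ := by
  rw [coneRefinement, ae_toFinite, Measure.ae_sum_iff]

lemma isProbabilityMeasure_coneRefinement [SecondCountableTopology X] [SFinite ℙ] [NeZero ℙ]
    (hφ : Continuous φ) (hC : IsClosed C) :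
    IsProbabilityMeasure (coneRefinement φ C γ₀ ℙ) := by
  have hmap : ℙ.map (coneTrim φ C γ₀ 0) ≠ 0 :=
    (Measure.map_ne_zero_iff (measurable_coneTrim hφ hC 0).aemeasurable).2 (NeZero.ne ℙ)
  have : NeZero (Measure.sum fun j => ℙ.map (coneTrim φ C γ₀ j)) :=
    ⟨fun h => hmap (Measure.nonpos_iff_eq_zero'.1 (h ▸ Measure.le_sum _ 0))⟩
  exact inferInstanceAs (IsProbabilityMeasure (Measure.toFinite _))

lemma ae_isConeCurve_coneRefinement [SecondCountableTopology X] [SFinite ℙ] (hφ : Continuous φ)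
    (hC' : IsClosed C') (hγ₀ : IsConeCurve φ C' γ₀) (h : ∀ᵐ γ ∂ℙ, IsConeCurve φ C γ) :
    ∀ᵐ γ ∂coneRefinement φ C' γ₀ ℙ, IsConeCurve φ C' γ := by
  refine ae_coneRefinement_iff.2 fun j => ?_
  rw [ae_map_iff (measurable_coneTrim hφ hC' j).aemeasurable (measurableSet_isConeCurve hφ hC')]
  filter_upwards [h] with γ hγ
  exact hγ.trim_badPairs hφ hC' (by positivity) hγ₀

lemma nu_absolutelyContinuous_sum_nu_coneRefinement [SecondCountableTopology X] [MeasurableSpace X]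
    [BorelSpace X] [SFinite ℙ] (hφ : LocallyLipschitz φ) (hC : IsClosedDoubleCone C) {ι : Type*}
    [Countable ι] [Nonempty ι] {C' : ι → Set (E n)} (hC' : ∀ i, IsClosedDoubleCone (C' i))
    (hcover : C \ {0} ⊆ ⋃ i, interior (C' i)) (hℙ : ∀ᵐ γ ∂ℙ, IsConeCurve φ C γ) :
    nu ℙ ≪ Measure.sum fun i => nu (coneRefinement φ (C' i) γ₀ ℙ) := by
  refine .mk fun B hB hB0 => (nu_apply_eq_zero_iff hB).2 ?_
  have htrim : ∀ᵐ γ ∂ℙ, ∀ i j, (coneTrim φ (C' i) γ₀ j γ).measure B = 0 := by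
    refine ae_all_iff.2 fun i => ae_all_iff.2 fun j => ?_
    have hi := (nu_apply_eq_zero_iff hB).1 (Measure.sum_apply_eq_zero.1 hB0 i)
    exact ae_of_ae_map (measurable_coneTrim hφ.continuous (hC' i).isClosed j).aemeasurable
      (ae_coneRefinement_iff.1 hi j)
  filter_upwards [htrim, hℙ] with γ hγB hγ
  exact hγ.measure_eq_zero_of_coneTrim hφ hC hC' hcover hB hγB

theorem refine_alberti_general [TopologicalSpace.SeparableSpace X] [MeasurableSpace X]
    [BorelSpace X] {μ : Measure X} (hφ : LocallyLipschitz φ) (hC : IsClosedDoubleCone C)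
    (hrep : ∃ ℙ : Measure (Fragment X), IsConeAlbertiRep μ φ C ℙ) {ι : Type*} [Countable ι]
    [Nonempty ι] {C' : ι → Set (E n)} (hC' : ∀ i, IsClosedDoubleCone (C' i))
    (hcover : C \ {0} ⊆ ⋃ i, interior (C' i)) :
    ∃ A : ι → Set X, (∀ i, MeasurableSet (A i)) ∧ (⋃ i, A i) = univ ∧
      ∀ i, ∃ ℙ : Measure (Fragment X), IsConeAlbertiRep (μ.restrict (A i)) φ (C' i) ℙ := by
  obtain ⟨ℙ, hprob, hac, hcurve⟩ := hrep
  have : SecondCountableTopology X := UniformSpace.secondCountable_of_separable X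
  obtain ⟨γ⟩ := nonempty_of_isProbabilityMeasure ℙ
  obtain ⟨⟨_, x⟩, -⟩ : γ.graph.Nonempty := γ.1.nonempty
  obtain ⟨A, hA, hAuniv, hAac⟩ := exists_iUnion_eq_univ_restrict_absolutelyContinuous
    (nu_absolutelyContinuous_sum_nu_coneRefinement (γ₀ := .single x) hφ hC hC' hcover hcurve)
  refine ⟨A, hA, hAuniv, fun i => ⟨coneRefinement φ (C' i) (.single x) ℙ, ?_, ?_, ?_⟩⟩
  · exact isProbabilityMeasure_coneRefinement hφ.continuous (hC' i).isClosed
  · exact (hac.restrict (A i)).trans (hAac i)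
  · exact ae_isConeCurve_coneRefinement hφ.continuous (hC' i).isClosed
      (isConeCurve_single (hC' i).zero_mem x) hcurve

end Refinement

/-- If `μ` has a `C`-Alberti representation with respect to `φ` and
`C \\ {0}` is covered by the interiors of cones `C₁,…,C_m`, then there is a Borel
decomposition `X = A₁ ∪ … ∪ A_m` such that each `μ|_{Aᵢ}` has a `Cᵢ`-Alberti
representation with respect to `φ`. -/
theorem refine_alberti (μ : Measure X) [SigmaFinite μ] {n : ℕ}
    (φ : X → E n) (hφ : ∃ K, LipschitzWith K φ) (C : Set (E n)) (hC : IsCone C)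
    (hrep : ∃ ℙ : Measure (Fragment X), IsConeAlbertiRep μ φ C ℙ)
    {m : ℕ} (C' : Fin m → Set (E n)) (hC' : ∀ i, IsCone (C' i))
    (hcover : C \ {0} ⊆ ⋃ i, interior (C' i)) :
    ∃ A : Fin m → Set X, (∀ i, MeasurableSet (A i)) ∧ (⋃ i, A i) = Set.univ ∧
      ∀ i, ∃ ℙ : Measure (Fragment X), IsConeAlbertiRep (μ.restrict (A i)) φ (C' i) ℙ := by
  have : Nonempty (Fin m) := nonempty_iUnion.1 ((hC.diff_zero_nonempty).mono hcover) |>.nonempty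
  exact refine_alberti_general hφ.choose_spec.locallyLipschitz hC.isClosedDoubleCone hrep
    (fun i => (hC' i).isClosedDoubleCone) hcover

end BKO
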